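/- Geometric moments of the pessimist covariance are finite in the natural distance: let A be an invertible real n×n matrix, W a real n×n positive definite symmetric matrix, Q a real n×n positive semidefinite symmetric matrix, and γ̄ ∈ (0,1). Define M(j) = A^j W (Aᵀ)^j + ∑_{i=0}^{j−1} A^i Q (Aᵀ)^i for j ∈ ℕ. Then the series ∑_{j=0}^∞ γ̄·(1−γ̄)^j · ∑_{i=1}^n (log λᵢ(M(j)))² converges, where λ₁(M(j)),…,λₙ(M(j)) are the eigenvalues of the positive definite symmetric matrix M(j). -/

import Mathlib

open Matrix

noncomputable def matEigs {n : ℕ} (M : Matrix (Fin n) (Fin n) ℝ) : Fin n → ℝ := by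
  classical exact if h : M.IsHermitian then h.eigenvalues else 0

open scoped ComplexOrder in
/-- The positive semidefinite square root of a positive semidefinite matrix
(the definition of the older Mathlib, which has since been removed). -/
noncomputable def Matrix.PosSemidef.sqrt {n 𝕜 : Type*} [Fintype n] [RCLike 𝕜] [DecidableEq n]
    {A : Matrix n n 𝕜} (hA : A.PosSemidef) : Matrix n n 𝕜 :=
  hA.1.eigenvectorUnitary.1 * diagonal (((↑) : ℝ → 𝕜) ∘ Real.sqrt ∘ hA.1.eigenvalues) *
    (star hA.1.eigenvectorUnitary : Matrix n n 𝕜)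

noncomputable def matSqrt {n : ℕ} (M : Matrix (Fin n) (Fin n) ℝ) :
    Matrix (Fin n) (Fin n) ℝ := by
  classical exact if h : M.PosSemidef then h.sqrt else 0

/-- The natural (Fisher / affine-invariant) distance on positive definite
matrices: `d(P₁,P₂) = (∑ᵢ (log λᵢ)²)^{1/2}` where `λᵢ` are the eigenvalues of
`P₂^{-1/2} P₁ P₂^{-1/2}`. -/
noncomputable def natDist {n : ℕ} (P₁ P₂ : Matrix (Fin n) (Fin n) ℝ) : ℝ :=
  Real.sqrt (∑ i : Fin n,
    Real.log (matEigs ((matSqrt P₂)⁻¹ * P₁ * (matSqrt P₂)⁻¹) i) ^ 2)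

section
open scoped MatrixOrder

theorem aux_bounds {n : ℕ} {P : Matrix (Fin n) (Fin n) ℝ} (h : P.IsHermitian) (c : ℝ) :
    ((P - c • (1 : Matrix (Fin n) (Fin n) ℝ)).PosSemidef ↔ ∀ i, c ≤ h.eigenvalues i) ∧
    ((c • (1 : Matrix (Fin n) (Fin n) ℝ) - P).PosSemidef ↔ ∀ i, h.eigenvalues i ≤ c) := by
  have h1 := algebraMap_le_iff_le_spectrum (R := ℝ) (r := c) (a := P) (ha := h)
  have h2 := le_algebraMap_iff_spectrum_le (R := ℝ) (r := c) (a := P) (ha := h)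
  rw [Matrix.le_iff, Algebra.algebraMap_eq_smul_one, h.spectrum_real_eq_range_eigenvalues] at h1 h2
  simpa using And.intro h1 h2

theorem aux_lower {n : ℕ} {P : Matrix (Fin n) (Fin n) ℝ} (h : P.PosDef) :
    ∃ c : ℝ, 0 < c ∧ (P - c • (1 : Matrix (Fin n) (Fin n) ℝ)).PosSemidef := by
  obtain ⟨c, hc, hc'⟩ : ∃ c : ℝ, 0 < c ∧ ∀ i, c ≤ h.1.eigenvalues i := by
    rcases isEmpty_or_nonempty (Fin n) with he | he
    · exact ⟨1, one_pos, fun i => he.elim i⟩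
    · obtain ⟨i, hi⟩ := Finite.exists_min h.1.eigenvalues
      exact ⟨_, h.eigenvalues_pos i, hi⟩
  exact ⟨c, hc, (aux_bounds h.1 c).1.2 hc'⟩

theorem aux_upper {n : ℕ} {P : Matrix (Fin n) (Fin n) ℝ} (h : P.IsHermitian) :
    ∃ c : ℝ, 1 ≤ c ∧ (c • (1 : Matrix (Fin n) (Fin n) ℝ) - P).PosSemidef := by
  refine ⟨1 + ∑ i, |h.eigenvalues i|, ?_, (aux_bounds h _).2.2 fun i => ?_⟩
  · have : 0 ≤ ∑ i, |h.eigenvalues i| := Finset.sum_nonneg fun _ _ => abs_nonneg _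
    linarith
  · have := Finset.single_le_sum (f := fun i => |h.eigenvalues i|) (fun _ _ => abs_nonneg _) (Finset.mem_univ i)
    have h2 := le_abs_self (h.eigenvalues i)
    linarith

end

theorem aux_rec {n : ℕ} (A W Q : Matrix (Fin n) (Fin n) ℝ) (j : ℕ) :
    A ^ (j+1) * W * Aᵀ ^ (j+1) + ∑ l ∈ Finset.range (j+1), A ^ l * Q * Aᵀ ^ l =
    A * (A ^ j * W * Aᵀ ^ j + ∑ l ∈ Finset.range j, A ^ l * Q * Aᵀ ^ l) * Aᵀ + Q := by
  rw [Finset.sum_range_succ', mul_add, add_mul, Finset.mul_sum, Finset.sum_mul]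
  simp only [pow_succ' A, pow_succ Aᵀ, pow_zero, one_mul, mul_one, mul_assoc, add_assoc]

theorem aux_conj {n : ℕ} (A : Matrix (Fin n) (Fin n) ℝ) {P : Matrix (Fin n) (Fin n) ℝ}
    (h : P.PosSemidef) : (A * P * Aᵀ).PosSemidef := by
  simpa using h.mul_mul_conjTranspose_same A

theorem aux_main {n : ℕ} (A W Q : Matrix (Fin n) (Fin n) ℝ)
    (hA : IsUnit A.det) (hW : W.PosDef) (hQ : Q.PosSemidef) :
    ∃ D : ℝ, 0 ≤ D ∧ ∀ (j : ℕ) (i : Fin n), |Real.log (matEigs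
      (A ^ j * W * Aᵀ ^ j + ∑ l ∈ Finset.range j, A ^ l * Q * Aᵀ ^ l) i)| ≤ D * (j + 1) := by
  set M : ℕ → Matrix (Fin n) (Fin n) ℝ := fun j =>
    A ^ j * W * Aᵀ ^ j + ∑ l ∈ Finset.range j, A ^ l * Q * Aᵀ ^ l with hM
  have hM0 : M 0 = W := by simp [hM]
  have hMs : ∀ j, M (j+1) = A * M j * Aᵀ + Q := fun j => aux_rec A W Q j
  have hAA : (A * Aᵀ).PosDef := by
    have := Matrix.PosDef.mul_conjTranspose_self A
      (Matrix.vecMul_injective_of_isUnit ((Matrix.isUnit_iff_isUnit_det A).2 hA))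
    simpa using this
  have hH : ∀ j, (M j).PosSemidef := by
    intro j
    induction j with
    | zero => rw [hM0]; exact hW.posSemidef
    | succ j ih => rw [hMs]; exact (aux_conj A ih).add hQ
  obtain ⟨c, hc, hcW⟩ := aux_lower hW
  obtain ⟨r, hr, hrA⟩ := aux_lower hAA
  obtain ⟨K, hK, hKW⟩ := aux_upper hW.1
  obtain ⟨R, hR, hRA⟩ := aux_upper hAA.1
  obtain ⟨q, hq, hqQ⟩ := aux_upper hQ.1
  have hlow : ∀ j, (M j - (c * r ^ j) • (1 : Matrix (Fin n) (Fin n) ℝ)).PosSemidef := by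
    intro j
    induction j with
    | zero => simpa [hM0] using hcW
    | succ j ih =>
      have e : M (j+1) - (c * r ^ (j+1)) • (1 : Matrix (Fin n) (Fin n) ℝ) =
          A * (M j - (c * r ^ j) • (1 : Matrix (Fin n) (Fin n) ℝ)) * Aᵀ +
          (c * r ^ j) • (A * Aᵀ - r • (1 : Matrix (Fin n) (Fin n) ℝ)) + Q := by
        rw [hMs, mul_sub, sub_mul, smul_sub, smul_smul, pow_succ, mul_assoc c]
        simp only [Matrix.mul_smul, Matrix.smul_mul, mul_one]
        abel
      rw [e]
      exact ((aux_conj A ih).add (hrA.smul (by positivity))).add hQ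
  have hup : ∀ j, ((K * (R + q) ^ j) • (1 : Matrix (Fin n) (Fin n) ℝ) - M j).PosSemidef := by
    intro j
    induction j with
    | zero => simpa [hM0] using hKW
    | succ j ih =>
      have h1 : 1 ≤ K * (R + q) ^ j :=
        one_le_mul_of_one_le_of_one_le hK (one_le_pow₀ (by linarith))
      have e : (K * (R + q) ^ (j+1)) • (1 : Matrix (Fin n) (Fin n) ℝ) - M (j+1) =
          A * ((K * (R + q) ^ j) • (1 : Matrix (Fin n) (Fin n) ℝ) - M j) * Aᵀ +
          (K * (R + q) ^ j) • (R • (1 : Matrix (Fin n) (Fin n) ℝ) - A * Aᵀ) +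
          ((q • (1 : Matrix (Fin n) (Fin n) ℝ) - Q) +
            ((K * (R + q) ^ j - 1) * q) • (1 : Matrix (Fin n) (Fin n) ℝ)) := by
        have e2 : K * (R + q) ^ (j+1) = K * (R + q) ^ j * R + q + (K * (R + q) ^ j - 1) * q := by
          ring
        rw [hMs, mul_sub, sub_mul, smul_sub, smul_smul, e2, add_smul, add_smul]
        simp only [Matrix.mul_smul, Matrix.smul_mul, mul_one]
        abel
      rw [e]
      refine ((aux_conj A ih).add (hRA.smul (by linarith))).add (hqQ.add ?_)
      exact Matrix.PosSemidef.one.smul (mul_nonneg (by linarith) (by linarith))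
  refine ⟨|Real.log c| + |Real.log r| + |Real.log K| + |Real.log (R + q)|, by positivity, ?_⟩
  intro j i
  change |Real.log (matEigs (M j) i)| ≤ _
  have hE : matEigs (M j) i = (hH j).1.eigenvalues i := by
    unfold matEigs
    rw [dif_pos (hH j).1]
  rw [hE]
  have l1 := (aux_bounds (hH j).1 _).1.1 (hlow j) i
  have l2 := (aux_bounds (hH j).1 _).2.1 (hup j) i
  have p1 : 0 < c * r ^ j := by positivity
  have g1 := Real.log_le_log p1 l1
  have g2 := Real.log_le_log (p1.trans_le l1) l2
  have hRq : 0 < R + q := by linarith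
  rw [Real.log_mul hc.ne' (by positivity), Real.log_pow] at g1
  rw [Real.log_mul (by positivity) (by positivity), Real.log_pow] at g2
  have hj : (0:ℝ) ≤ j := Nat.cast_nonneg j
  have a1 := mul_le_mul_of_nonneg_left (neg_abs_le (Real.log r)) hj
  have a2 := mul_le_mul_of_nonneg_left (le_abs_self (Real.log (R + q))) hj
  have b1 := neg_abs_le (Real.log c)
  have b2 := le_abs_self (Real.log K)
  have c1 := mul_nonneg hj (abs_nonneg (Real.log c))
  have c2 := mul_nonneg hj (abs_nonneg (Real.log K))
  have c3 := mul_nonneg hj (abs_nonneg (Real.log r))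
  have c4 := mul_nonneg hj (abs_nonneg (Real.log (R + q)))
  have d1 := abs_nonneg (Real.log c)
  have d2 := abs_nonneg (Real.log K)
  have d3 := abs_nonneg (Real.log r)
  have d4 := abs_nonneg (Real.log (R + q))
  rw [abs_le]
  constructor <;> nlinarith

theorem summable_geometric_log_sq_eigs
    {n : ℕ} (A W Q : Matrix (Fin n) (Fin n) ℝ)
    (hA : IsUnit A.det) (hW : W.PosDef) (hQ : Q.PosSemidef)
    (γ : ℝ) (hγ : γ ∈ Set.Ioo (0 : ℝ) 1) :
    Summable (fun j : ℕ =>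
      γ * (1 - γ) ^ j *
        ∑ i : Fin n,
          Real.log (matEigs
            (A ^ j * W * Aᵀ ^ j + ∑ l ∈ Finset.range j, A ^ l * Q * Aᵀ ^ l) i) ^ 2) := by
  obtain ⟨D, hD, hb⟩ := aux_main A W Q hA hW hQ
  obtain ⟨h0, h1⟩ := hγ
  have hn : ‖1 - γ‖ < 1 := by
    rw [Real.norm_eq_abs, abs_lt]; constructor <;> linarith
  have s2 := summable_pow_mul_geometric_of_norm_lt_one 2 hn
  have s1 := summable_pow_mul_geometric_of_norm_lt_one 1 hn
  have s0 := summable_pow_mul_geometric_of_norm_lt_one 0 hn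
  have hg : 0 ≤ 1 - γ := by linarith
  refine Summable.of_nonneg_of_le (fun j => ?_) (fun j => ?_)
    (((s2.add (s1.mul_left 2)).add s0).mul_left (γ * (n * D ^ 2)))
  · have := Finset.sum_nonneg (s := Finset.univ) fun (i : Fin n) _ => sq_nonneg (Real.log (matEigs
      (A ^ j * W * Aᵀ ^ j + ∑ l ∈ Finset.range j, A ^ l * Q * Aᵀ ^ l) i))
    positivity
  · have hs : ∑ i : Fin n, Real.log (matEigs
        (A ^ j * W * Aᵀ ^ j + ∑ l ∈ Finset.range j, A ^ l * Q * Aᵀ ^ l) i) ^ 2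
        ≤ ∑ i : Fin n, (D * (j + 1)) ^ 2 := by
      refine Finset.sum_le_sum fun i _ => ?_
      rw [← sq_abs]
      exact pow_le_pow_left₀ (abs_nonneg _) (hb j i) 2
    refine (mul_le_mul_of_nonneg_left hs (by positivity)).trans (le_of_eq ?_)
    simp
    ring
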